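/- Let ν be a probability measure on 𝕋 with a density (still denoted ν) with respect to λ that is a-Hölder with constant A, i.e. |ν(x)−ν(y)| ≤ A d(x,y)^a for all x,y, where a ∈ (0,1] and A > 0. Take p = 2, so the generator is L_{α,β}f(x) = ½ f''(x) + α^{−1} ∫_𝕋 [f(x + αβ·⟨y−x⟩) − f(x)] ν(dy). Then there exists a constant C > 0, depending only on A, such that for every β ≥ 1 and every α ∈ (0, 1/(2β²)) there exists a bounded measurable function h : 𝕋 → ℝ with ∫_𝕋 L_{α,β}φ dμ_β = ∫_𝕋 φ·h dμ_β for all φ ∈ C²(𝕋), and with sup_x |h(x)| ≤ C·max(αβ⁴, α^a β^{1+a}). -/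

import Mathlib

open MeasureTheory Real Set Filter

noncomputable section

instance : Fact (0 < 2 * π) := ⟨Real.two_pi_pos⟩

/-- The circle `𝕋 = ℝ/(2πℤ)`. -/
abbrev 𝕋 : Type := AddCircle (2 * π)

/-- The normalized Haar probability measure `λ` on the circle. -/
def lam : Measure 𝕋 := (ENNReal.ofReal (2 * π))⁻¹ • volume

/-- The representative of a point of the circle in `(-π, π]`. -/
def rep (z : 𝕋) : ℝ := ((AddCircle.equivIoc (2 * π) (-π) z : Set.Ioc (-π) (-π + 2 * π)) : ℝ)

/-- The potential `U₂(x) = ∫ d(x,y)² ν(dy)`. -/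
def U2 (ν : Measure 𝕋) (x : 𝕋) : ℝ := ∫ y, dist x y ^ 2 ∂ν

/-- The normalizing constant `Z_β = ∫ exp(-β U₂) dλ`. -/
def Z2 (ν : Measure 𝕋) (β : ℝ) : ℝ := ∫ x, Real.exp (-β * U2 ν x) ∂lam

/-- The Gibbs measure `μ_β` with density `exp(-β U₂)/Z_β` w.r.t. `λ`. -/
def gibbs2 (ν : Measure 𝕋) (β : ℝ) : Measure 𝕋 :=
  lam.withDensity fun x => ENNReal.ofReal (Real.exp (-β * U2 ν x) / Z2 ν β)

/-- The generator for `p = 2`, acting on (the periodic lift) `φ` of a `C²` function on `𝕋`: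
`L_{α,β}φ(x) = ½ φ''(x) + α⁻¹ ∫ [φ(x + αβ⟨y-x⟩) - φ(x)] ν(dy)`. -/
def gen2 (ν : Measure 𝕋) (α β : ℝ) (φ : ℝ → ℝ) (z : 𝕋) : ℝ :=
  (1 / 2) * deriv (deriv φ) (rep z)
    + α⁻¹ * ∫ y, (φ (rep z + α * β * rep (y - z)) - φ (rep z)) ∂ν

/-! On the line, with `G` the lift of the density, `ε = αβ` and `w = exp (-β U₂)`, integration by
parts and the translation `x ↦ x - ε t` give
`h = w''/(2w) + α⁻¹ (w(x)⁻¹ (2π)⁻¹ ∫ w(x - ε t) G(x + (1 - ε) t) dt - 1)`.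
Expanding `w(x - ε t)/w(x) = 1 + βε U₂'(x) t + O((βε)²)` reduces the integral to the moments
`m_n = (2π)⁻¹ ∫ tⁿ G(x + (1 - ε) t) dt` for `n = 0, 1`. Rescaling `(1 - ε) t` compares these with
the moments of `G` over a full period, up to integrals over the arcs of length `επ` on either side
of the antipode `x + π`. Hence `m₁ = -U₂'(x)/2 + O(ε)`, and the drift term cancels the square in
`w''/(2w) = β² U₂'²/2 - β (1 - G(x + π))`; and `m₀ = 1 + ε (1 - G(x + π)) + O(ε² + ε^(1+a))`, by
Hölder continuity near the antipode, cancels the rest.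
-/

open intervalIntegral

section Analysis

theorem abs_exp_sub_one_sub_id_le_sq_mul_exp_abs (u : ℝ) :
    |exp u - 1 - u| ≤ u ^ 2 * exp |u| := by
  have h := Complex.norm_exp_sub_sum_le_norm_mul_exp (u : ℂ) 2
  have hsum : Complex.exp u - ∑ m ∈ Finset.range 2, (u : ℂ) ^ m / m.factorial =
      ((exp u - 1 - u : ℝ) : ℂ) := by
    simp [Finset.sum_range_succ, sub_sub]
  rwa [hsum, Complex.norm_real, Complex.norm_real, norm_eq_abs, norm_eq_abs, sq_abs] at h

theorem abs_sub_le_of_hasDerivAt {f f' : ℝ → ℝ} {D : ℝ} (hf : ∀ z, HasDerivAt f (f' z) z)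
    (hD : ∀ z, |f' z| ≤ D) (x y : ℝ) : |f y - f x| ≤ D * |y - x| :=
  convex_univ.norm_image_sub_le_of_norm_hasDerivWithin_le
    (fun z _ => (hf z).hasDerivWithinAt) (fun z _ => hD z) (mem_univ _) (mem_univ _)

theorem abs_sub_sub_mul_le_of_hasDerivAt {f f' : ℝ → ℝ} {K : ℝ}
    (hf : ∀ z, HasDerivAt f (f' z) z) (hK : ∀ y z, |f' z - f' y| ≤ K * |z - y|) (x y : ℝ) :
    |f y - f x - (y - x) * f' x| ≤ K * (y - x) ^ 2 := by
  have hK₀ : 0 ≤ K := by simpa using (abs_nonneg _).trans (hK 0 1)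
  have hg : ∀ z, HasDerivAt (fun z => f z - z * f' x) (f' z - f' x) z := fun z =>
    ((hf z).sub ((hasDerivAt_id z).mul_const (f' x))).congr_deriv (by rw [one_mul])
  have hbound : ∀ z ∈ uIcc x y, ‖f' z - f' x‖ ≤ K * |y - x| := fun z hz =>
    (hK x z).trans (mul_le_mul_of_nonneg_left (abs_sub_left_of_mem_uIcc hz) hK₀)
  calc |f y - f x - (y - x) * f' x| = ‖(f y - y * f' x) - (f x - x * f' x)‖ := by
        rw [norm_eq_abs]; congr 1; ring
    _ ≤ K * |y - x| * ‖y - x‖ :=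
        (convex_uIcc x y).norm_image_sub_le_of_norm_hasDerivWithin_le
          (fun z _ => (hg z).hasDerivWithinAt) hbound left_mem_uIcc right_mem_uIcc
    _ = K * (y - x) ^ 2 := by rw [norm_eq_abs, mul_assoc, ← sq, sq_abs]

theorem abs_exp_mul_sub_sub_le {f f' : ℝ → ℝ} {D K β ρ s : ℝ}
    (hf : ∀ z, HasDerivAt f (f' z) z) (hD : ∀ z, |f' z| ≤ D)
    (hK : ∀ y z, |f' z - f' y| ≤ K * |z - y|) (hβ : 1 ≤ β) (hs : |β * s| ≤ ρ) (x : ℝ) :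
    |exp (β * (f x - f (x - s))) - 1 - β * f' x * s| ≤
      (D ^ 2 * exp (D * ρ) + K) * (β * s) ^ 2 := by
  have hβ₀ : 0 ≤ β := zero_le_one.trans hβ
  have hD₀ : 0 ≤ D := (abs_nonneg _).trans (hD 0)
  have hK₀ : 0 ≤ K := by simpa using (abs_nonneg _).trans (hK 0 1)
  set u := β * (f x - f (x - s)) with hu
  have hu_abs : |u| ≤ D * |β * s| := by
    have h := abs_sub_le_of_hasDerivAt hf hD (x - s) x
    rw [sub_sub_cancel] at h
    calc |u| = β * |f x - f (x - s)| := by rw [hu, abs_mul, abs_of_nonneg hβ₀]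
      _ ≤ β * (D * |s|) := mul_le_mul_of_nonneg_left h hβ₀
      _ = D * |β * s| := by rw [abs_mul, abs_of_nonneg hβ₀]; ring
  have hexp : |exp u - 1 - u| ≤ D ^ 2 * exp (D * ρ) * (β * s) ^ 2 := calc
    |exp u - 1 - u| ≤ |u| ^ 2 * exp |u| := by
        rw [sq_abs]; exact abs_exp_sub_one_sub_id_le_sq_mul_exp_abs u
    _ ≤ (D * |β * s|) ^ 2 * exp (D * ρ) := by
        gcongr
        exact hu_abs.trans (mul_le_mul_of_nonneg_left hs hD₀)
    _ = D ^ 2 * exp (D * ρ) * (β * s) ^ 2 := by rw [mul_pow, sq_abs]; ring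
  have htaylor : |u - β * f' x * s| ≤ K * (β * s) ^ 2 := by
    have h := abs_sub_sub_mul_le_of_hasDerivAt hf hK x (x - s)
    calc |u - β * f' x * s| = β * |f (x - s) - f x - (x - s - x) * f' x| := by
          rw [← abs_of_nonneg hβ₀, ← abs_mul, abs_of_nonneg hβ₀, ← abs_neg, hu]; congr 1; ring
      _ ≤ β * (K * (x - s - x) ^ 2) := mul_le_mul_of_nonneg_left h hβ₀
      _ = β * (K * s ^ 2) := by ring
      _ ≤ β ^ 2 * (K * s ^ 2) := by gcongr; exact le_self_pow₀ hβ two_ne_zero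
      _ = K * (β * s) ^ 2 := by ring
  calc |exp u - 1 - β * f' x * s| = |(exp u - 1 - u) + (u - β * f' x * s)| := by congr 1; ring
    _ ≤ |exp u - 1 - u| + |u - β * f' x * s| := abs_add_le _ _
    _ ≤ (D ^ 2 * exp (D * ρ) + K) * (β * s) ^ 2 := by linarith

theorem hasDerivAt_integral_of_continuous {F F' : ℝ → ℝ → ℝ} {a b : ℝ}
    (hF : ∀ x, Continuous (F x)) (hF' : Continuous (Function.uncurry F'))
    (hderiv : ∀ x t, HasDerivAt (fun y => F y t) (F' x t) x) (x : ℝ) :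
    HasDerivAt (fun y => ∫ t in a..b, F y t) (∫ t in a..b, F' x t) x := by
  obtain ⟨C, hC⟩ := ((isCompact_closedBall x 1).prod (isCompact_uIcc (a := a) (b := b))
    ).exists_bound_of_continuousOn hF'.continuousOn
  refine (hasDerivAt_integral_of_dominated_loc_of_deriv_le (bound := fun _ => C)
    (Metric.closedBall_mem_nhds x one_pos)
    (Eventually.of_forall fun y => (hF y).aestronglyMeasurable)
    ((hF x).intervalIntegrable _ _)
    (hF'.comp (Continuous.prodMk_right x)).aestronglyMeasurable
    (Eventually.of_forall fun t ht y hy => hC (y, t) ⟨hy, uIoc_subset_uIcc ht⟩)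
    intervalIntegrable_const
    (Eventually.of_forall fun t _ y _ => hderiv y t)).2

theorem hasDerivAt_integral_mul_comp_add {f f' G : ℝ → ℝ} (hf : ∀ t, HasDerivAt f (f' t) t)
    (hf' : Continuous f') (hG : Continuous G) (a b x : ℝ) :
    HasDerivAt (fun y => ∫ t in a..b, f t * G (y + t))
      (f b * G (x + b) - f a * G (x + a) - ∫ t in a..b, f' t * G (x + t)) x := by
  -- `G` need not be differentiable: integrating by parts against a primitive `P` of `G` leaves an
  -- integrand that is differentiable in `x`.
  set P : ℝ → ℝ := fun y => ∫ s in (0 : ℝ)..y, G s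
  have hP : ∀ y, HasDerivAt P (G y) y := fun y => hG.integral_hasStrictDerivAt 0 y |>.hasDerivAt
  have hPc : Continuous P := continuous_iff_continuousAt.2 fun y => (hP y).continuousAt
  have hparts : (fun y => ∫ t in a..b, f t * G (y + t)) =
      fun y => f b * P (y + b) - f a * P (y + a) - ∫ t in a..b, f' t * P (y + t) := by
    ext y
    exact integral_mul_deriv_eq_deriv_mul (fun t _ => hf t)
      (fun t _ => (hP (y + t)).comp_const_add y t)
      (hf'.intervalIntegrable _ _) (Continuous.intervalIntegrable (by fun_prop) _ _)
  rw [hparts]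
  exact ((((hP (x + b)).comp_add_const x b).const_mul (f b)).sub
    (((hP (x + a)).comp_add_const x a).const_mul (f a))).sub
    (hasDerivAt_integral_of_continuous (F' := fun y t => f' t * G (y + t))
      (fun y => by fun_prop) (by unfold Function.uncurry; fun_prop)
      (fun y t => ((hP (y + t)).comp_add_const y t).const_mul (f' t)) x)

theorem abs_integral_sub_integral_le_of_abs_le {F : ℝ → ℝ} {r R K : ℝ} (hF : Continuous F)
    (hr : 0 ≤ r) (hrR : r ≤ R) (hK : ∀ s, r ≤ |s| → |s| ≤ R → |F s| ≤ K) :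
    |(∫ s in (-R)..R, F s) - ∫ s in (-r)..r, F s| ≤ 2 * (R - r) * K := by
  have hint : ∀ a b, IntervalIntegrable F volume a b := fun a b => hF.intervalIntegrable a b
  have hsplit : (∫ s in (-R)..R, F s) - ∫ s in (-r)..r, F s =
      (∫ s in (-R)..(-r), F s) + ∫ s in r..R, F s := by
    rw [← integral_add_adjacent_intervals (hint (-R) (-r)) (hint _ R),
      ← integral_add_adjacent_intervals (hint (-r) r) (hint _ R)]
    ring
  have hleft : |∫ s in (-R)..(-r), F s| ≤ K * |-r - -R| := by
    rw [← norm_eq_abs]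
    refine intervalIntegral.norm_integral_le_of_norm_le_const fun s hs => ?_
    rw [uIoc_of_le (neg_le_neg hrR)] at hs
    have habs : |s| = -s := abs_of_nonpos (by linarith [hs.2])
    exact hK s (by linarith [hs.2]) (by linarith [hs.1])
  have hright : |∫ s in r..R, F s| ≤ K * |R - r| := by
    rw [← norm_eq_abs]
    refine intervalIntegral.norm_integral_le_of_norm_le_const fun s hs => ?_
    rw [uIoc_of_le hrR] at hs
    have habs : |s| = s := abs_of_nonneg (by linarith [hs.1])
    exact hK s (by linarith [hs.1]) (by linarith [hs.2])
  rw [neg_sub_neg, abs_of_nonneg (sub_nonneg.2 hrR)] at hleft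
  rw [abs_of_nonneg (sub_nonneg.2 hrR)] at hright
  rw [hsplit]
  linarith [abs_add_le (∫ s in (-R)..(-r), F s) (∫ s in r..R, F s)]

end Analysis

section Periodic

theorem integral_comp_add_left_of_periodic {F : ℝ → ℝ} {a b T : ℝ} (hF : Function.Periodic F T)
    (hab : a + T = b) (c : ℝ) : ∫ t in a..b, F (c + t) = ∫ t in a..b, F t := by
  rw [integral_comp_add_left F c, ← hab, ← add_assoc, hF.intervalIntegral_add_eq (c + a) a]

theorem periodic_deriv {φ : ℝ → ℝ} {T : ℝ} (hφ : Function.Periodic φ T) :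
    Function.Periodic (deriv φ) T := fun x => by
  rw [← deriv_comp_add_const, hφ.funext]

theorem integral_mul_deriv_of_periodic {u v u' v' : ℝ → ℝ} {a b T : ℝ}
    (hu : ∀ x, HasDerivAt u (u' x) x) (hv : ∀ x, HasDerivAt v (v' x) x)
    (hu' : Continuous u') (hv' : Continuous v')
    (hu_per : Function.Periodic u T) (hv_per : Function.Periodic v T) (hab : a + T = b) :
    ∫ x in a..b, u x * v' x = -∫ x in a..b, u' x * v x := by
  rw [integral_mul_deriv_eq_deriv_mul (fun x _ => hu x) (fun x _ => hv x)
    (hu'.intervalIntegrable _ _) (hv'.intervalIntegrable _ _), ← hab, hu_per, hv_per, sub_self,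
    zero_sub]

theorem integral_mul_deriv_deriv_of_periodic {w w' w'' φ : ℝ → ℝ} {a b T : ℝ}
    (hw : ∀ x, HasDerivAt w (w' x) x) (hw' : ∀ x, HasDerivAt w' (w'' x) x)
    (hw'' : Continuous w'') (hφ : ContDiff ℝ 2 φ) (hw_per : Function.Periodic w T)
    (hw'_per : Function.Periodic w' T) (hφ_per : Function.Periodic φ T) (hab : a + T = b) :
    ∫ x in a..b, w x * deriv (deriv φ) x = ∫ x in a..b, w'' x * φ x := by
  have hφ' : ContDiff ℝ 1 (deriv φ) := ContDiff.deriv' hφ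
  have hw'c : Continuous w' := continuous_iff_continuousAt.2 fun x => (hw' x).continuousAt
  rw [integral_mul_deriv_of_periodic hw (fun x => (hφ'.differentiable one_ne_zero x).hasDerivAt)
      hw'c (hφ'.continuous_deriv le_rfl) hw_per (periodic_deriv hφ_per) hab,
    integral_mul_deriv_of_periodic hw' (fun x => (hφ.differentiable two_ne_zero x).hasDerivAt)
      hw'' hφ'.continuous hw'_per hφ_per hab, neg_neg]

theorem integral_integral_comp_add_left_of_periodic {F : ℝ → ℝ → ℝ} {σ : ℝ → ℝ} {a b c d T : ℝ}
    (hF : Continuous (Function.uncurry F)) (hσ : Continuous σ)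
    (hper : ∀ t, Function.Periodic (fun x => F x t) T) (hab : a + T = b) :
    ∫ x in a..b, ∫ t in c..d, F (σ t + x) t = ∫ x in a..b, ∫ t in c..d, F x t := by
  have hint : ∀ H : ℝ × ℝ → ℝ, Continuous H →
      IntegrableOn H (uIoc a b ×ˢ uIoc c d) := fun H hH =>
    (hH.continuousOn.integrableOn_compact (isCompact_uIcc.prod isCompact_uIcc)).mono_set
      (Set.prod_mono uIoc_subset_uIcc uIoc_subset_uIcc)
  rw [intervalIntegral_intervalIntegral_swap (hint _ hF),
    intervalIntegral_intervalIntegral_swap (F := fun x t => F (σ t + x) t)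
      (hint _ (hF.comp (f := fun p : ℝ × ℝ => (σ p.2 + p.1, p.2)) (by fun_prop)))]
  simp only [integral_comp_add_left_of_periodic (hper _) hab]

end Periodic

section Moment

/-- The normalized `n`-th moment `(2π)⁻¹ ∫ tⁿ G(x + r t) dt` over `(-π, π]` of a function `G` on
the line, seen from `x` and rescaled by `r`. -/
def moment (n : ℕ) (r : ℝ) (G : ℝ → ℝ) (x : ℝ) : ℝ :=
  (2 * π)⁻¹ * ∫ t in (-π)..π, t ^ n * G (x + r * t)

variable {G : ℝ → ℝ} {K : ℝ}

theorem abs_two_pi_inv_mul_integral_le {F : ℝ → ℝ} (hK : ∀ t, |t| ≤ π → |F t| ≤ K) :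
    |(2 * π)⁻¹ * ∫ t in (-π)..π, F t| ≤ K := by
  have h : |∫ t in (-π)..π, F t| ≤ K * |π - -π| := by
    rw [← norm_eq_abs]
    refine intervalIntegral.norm_integral_le_of_norm_le_const fun t ht => hK t ?_
    rw [uIoc_of_le (neg_le_self pi_pos.le)] at ht
    exact abs_le.2 ⟨ht.1.le, ht.2⟩
  rw [sub_neg_eq_add, ← two_mul, abs_of_pos two_pi_pos] at h
  rwa [abs_mul, abs_of_pos (inv_pos.2 two_pi_pos), inv_mul_le_iff₀ two_pi_pos, mul_comm]

theorem moment_periodic (hG : Function.Periodic G (2 * π)) (n : ℕ) (r : ℝ) :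
    Function.Periodic (moment n r G) (2 * π) := fun x => by
  simp only [moment, add_right_comm x (2 * π), hG _]

theorem moment_zero_sub_const (hG : Continuous G) (r c x : ℝ) :
    moment 0 r (fun y => G y - c) x = moment 0 r G x - c := by
  simp only [moment, pow_zero, one_mul]
  rw [intervalIntegral.integral_sub (Continuous.intervalIntegrable (by fun_prop) _ _)
    intervalIntegrable_const, intervalIntegral.integral_const, smul_eq_mul]
  field_simp
  ring

theorem abs_moment_le (n : ℕ) (hK : ∀ y, |G y| ≤ K) (r x : ℝ) :
    |moment n r G x| ≤ π ^ n * K := by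
  refine abs_two_pi_inv_mul_integral_le fun t ht => ?_
  rw [abs_mul, abs_pow]
  gcongr
  exact hK _

theorem abs_moment_one_sub_pow_mul_moment_le (hG : Continuous G) (n : ℕ) {r x : ℝ} (hr₀ : 0 ≤ r)
    (hr₁ : r ≤ 1) (hK : ∀ s, r * π ≤ |s| → |s| ≤ π → |G (x + s)| ≤ K) :
    |moment n 1 G x - r ^ (n + 1) * moment n r G x| ≤ (1 - r) * (π ^ n * K) := by
  have hscale : r ^ (n + 1) * ∫ t in (-π)..π, t ^ n * G (x + r * t) =
      ∫ s in (-(r * π))..(r * π), s ^ n * G (x + s) := by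
    rw [← mul_neg, ← mul_integral_comp_mul_left (f := fun s => s ^ n * G (x + s)), pow_succ',
      mul_assoc, ← intervalIntegral.integral_const_mul]
    simp only [mul_pow, mul_assoc]
  have htail := abs_integral_sub_integral_le_of_abs_le (F := fun s => s ^ n * G (x + s))
    (R := π) (K := π ^ n * K) (by fun_prop) (mul_nonneg hr₀ pi_pos.le)
    (mul_le_of_le_one_left pi_pos.le hr₁) fun s hs₁ hs₂ => by
      rw [abs_mul, abs_pow]
      gcongr
      exact hK s hs₁ hs₂
  have hfactor : moment n 1 G x - r ^ (n + 1) * moment n r G x = (2 * π)⁻¹ *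
      ((∫ s in (-π)..π, s ^ n * G (x + s)) - ∫ s in (-(r * π))..(r * π), s ^ n * G (x + s)) := by
    simp only [moment, one_mul, ← hscale]
    ring
  rw [hfactor, abs_mul, abs_of_pos (inv_pos.2 two_pi_pos), inv_mul_le_iff₀ two_pi_pos]
  linarith

theorem hasDerivAt_moment (hG : Continuous G) (hper : Function.Periodic G (2 * π)) (n : ℕ)
    (x : ℝ) :
    HasDerivAt (moment (n + 1) 1 G)
      ((2 * π)⁻¹ * (π ^ (n + 1) - (-π) ^ (n + 1)) * G (x + π) - (n + 1) * moment n 1 G x) x := by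
  have hshift : G (x + -π) = G (x + π) := by rw [← hper]; congr 1; ring
  have h := (hasDerivAt_integral_mul_comp_add (f := fun t => t ^ (n + 1))
    (f' := fun t => ((n + 1 : ℕ) : ℝ) * t ^ n) (fun t => hasDerivAt_pow (n + 1) t)
    (by fun_prop) hG (-π) π x).const_mul (2 * π)⁻¹
  simp only [mul_assoc, intervalIntegral.integral_const_mul, hshift] at h
  unfold moment
  simp only [one_mul]
  exact h.congr_deriv (by push_cast; ring)

end Moment

section Potential

/-- A continuous `2π`-periodic function with mean one over a period: the lift to the line of a
continuous density with respect to `lam`. -/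
structure IsPeriodicDensity (G : ℝ → ℝ) : Prop where
  continuous : Continuous G
  periodic : Function.Periodic G (2 * π)
  integral_eq : ∫ t in (-π)..π, G t = 2 * π

/-- The lift to the line of the potential `U₂` of the density `G`. -/
def potential (G : ℝ → ℝ) : ℝ → ℝ := moment 2 1 G

/-- The derivative `U₂'(x) = -2 ∫ ⟨y - x⟩ ν(dy)` of `potential G`. -/
def potentialDeriv (G : ℝ → ℝ) (x : ℝ) : ℝ := -2 * moment 1 1 G x

/-- The unnormalized Gibbs density `exp (-β U₂)` on the line. -/
def gibbsWeight (G : ℝ → ℝ) (β x : ℝ) : ℝ := exp (-β * potential G x)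

namespace IsPeriodicDensity

variable {G : ℝ → ℝ} {M : ℝ}

theorem moment_zero_one (hG : IsPeriodicDensity G) (x : ℝ) : moment 0 1 G x = 1 := by
  simp only [moment, pow_zero, one_mul]
  rw [integral_comp_add_left_of_periodic hG.periodic (by ring) x, hG.integral_eq,
    inv_mul_cancel₀ two_pi_pos.ne']

theorem abs_one_sub_le (hG : IsPeriodicDensity G) (hM : ∀ x y, |G x - G y| ≤ M) (y : ℝ) :
    |1 - G y| ≤ M := by
  have h := abs_moment_le (G := fun x => G x - G y) 0 (fun x => hM x y) 1 y
  rwa [moment_zero_sub_const hG.continuous, hG.moment_zero_one, pow_zero, one_mul] at h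

theorem hasDerivAt_potential (hG : IsPeriodicDensity G) (x : ℝ) :
    HasDerivAt (potential G) (potentialDeriv G x) x :=
  (hasDerivAt_moment hG.continuous hG.periodic 1 x).congr_deriv (by
    simp only [potentialDeriv]; push_cast; ring)

theorem hasDerivAt_potentialDeriv (hG : IsPeriodicDensity G) (x : ℝ) :
    HasDerivAt (potentialDeriv G) (2 * (1 - G (x + π))) x :=
  ((hasDerivAt_moment hG.continuous hG.periodic 0 x).const_mul (-2)).congr_deriv (by
    rw [hG.moment_zero_one]; push_cast; field_simp; ring)

theorem continuous_potential (hG : IsPeriodicDensity G) : Continuous (potential G) :=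
  continuous_iff_continuousAt.2 fun x => (hG.hasDerivAt_potential x).continuousAt

theorem continuous_potentialDeriv (hG : IsPeriodicDensity G) : Continuous (potentialDeriv G) :=
  continuous_iff_continuousAt.2 fun x => (hG.hasDerivAt_potentialDeriv x).continuousAt

theorem continuous_gibbsWeight (hG : IsPeriodicDensity G) (β : ℝ) :
    Continuous (gibbsWeight G β) :=
  continuous_exp.comp (continuous_const.mul hG.continuous_potential)

theorem periodic_gibbsWeight (hG : IsPeriodicDensity G) (β : ℝ) :
    Function.Periodic (gibbsWeight G β) (2 * π) := fun x => by
  rw [gibbsWeight, gibbsWeight, potential, moment_periodic hG.periodic]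

theorem hasDerivAt_gibbsWeight (hG : IsPeriodicDensity G) (β x : ℝ) :
    HasDerivAt (gibbsWeight G β) (-β * (gibbsWeight G β x * potentialDeriv G x)) x :=
  ((hG.hasDerivAt_potential x).const_mul (-β)).exp.congr_deriv (by rw [gibbsWeight]; ring)

theorem hasDerivAt_deriv_gibbsWeight (hG : IsPeriodicDensity G) (β x : ℝ) :
    HasDerivAt (fun y => -β * (gibbsWeight G β y * potentialDeriv G y))
      (gibbsWeight G β x * (β ^ 2 * potentialDeriv G x ^ 2 - 2 * β * (1 - G (x + π)))) x :=
  (((hG.hasDerivAt_gibbsWeight β x).mul (hG.hasDerivAt_potentialDeriv x)).const_mul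
    (-β)).congr_deriv (by ring)

theorem abs_potentialDeriv_sub_le (hG : IsPeriodicDensity G) (hM : ∀ y, |1 - G y| ≤ M)
    (x y : ℝ) : |potentialDeriv G y - potentialDeriv G x| ≤ 2 * M * |y - x| :=
  abs_sub_le_of_hasDerivAt hG.hasDerivAt_potentialDeriv (fun z => by
    rw [abs_mul, abs_two]; linarith [hM (z + π)]) x y

end IsPeriodicDensity

theorem abs_potentialDeriv_le {G : ℝ → ℝ} {K : ℝ} (hK : ∀ y, |G y| ≤ K) (x : ℝ) :
    |potentialDeriv G x| ≤ 2 * π * K := by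
  have h := abs_moment_le 1 hK 1 x
  rw [pow_one] at h
  rw [potentialDeriv, abs_mul, abs_neg, abs_two]
  linarith

end Potential

section Adjoint

/-- The average of `φ` after a jump from `x` to `x + ε t`, where `x + t` has density `G`. -/
def jumpMean (G : ℝ → ℝ) (ε : ℝ) (φ : ℝ → ℝ) (x : ℝ) : ℝ :=
  (2 * π)⁻¹ * ∫ t in (-π)..π, G (x + t) * φ (x + ε * t)

/-- The adjoint of `jumpMean G ε` with respect to Lebesgue measure on a period. -/
def jumpMeanAdjoint (G : ℝ → ℝ) (ε : ℝ) (w : ℝ → ℝ) (x : ℝ) : ℝ :=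
  (2 * π)⁻¹ * ∫ t in (-π)..π, w (x - ε * t) * G (x - ε * t + t)

/-- The generator `L_{α,β}` acting on functions on the line, with jump density `G`. -/
def lineGenerator (G : ℝ → ℝ) (α β : ℝ) (φ : ℝ → ℝ) (x : ℝ) : ℝ :=
  (1 / 2) * deriv (deriv φ) x + α⁻¹ * (jumpMean G (α * β) φ x - φ x)

/-- The function `L*_{α,β}𝟙 = w⁻¹ (½ w'' + α⁻¹ (J* w - w))`, where `w` is the Gibbs weight and `J*`
is the adjoint of the jump operator; the factor `w''/w` is expanded. -/
def adjointOne (G : ℝ → ℝ) (α β x : ℝ) : ℝ :=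
  (1 / 2) * (β ^ 2 * potentialDeriv G x ^ 2 - 2 * β * (1 - G (x + π))) +
    α⁻¹ * ((gibbsWeight G β x)⁻¹ * jumpMeanAdjoint G (α * β) (gibbsWeight G β) x - 1)

variable {G : ℝ → ℝ}

theorem continuous_jumpMean {φ : ℝ → ℝ} (hG : Continuous G) (hφ : Continuous φ) (ε : ℝ) :
    Continuous (jumpMean G ε φ) :=
  (continuous_parametric_intervalIntegral_of_continuous'
    (f := fun x t => G (x + t) * φ (x + ε * t)) (by fun_prop) _ _).const_mul _

theorem continuous_jumpMeanAdjoint {w : ℝ → ℝ} (hG : Continuous G) (hw : Continuous w) (ε : ℝ) :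
    Continuous (jumpMeanAdjoint G ε w) :=
  (continuous_parametric_intervalIntegral_of_continuous'
    (f := fun x t => w (x - ε * t) * G (x - ε * t + t)) (by fun_prop) _ _).const_mul _

theorem IsPeriodicDensity.jumpMean_sub_eq {φ : ℝ → ℝ} (hG : IsPeriodicDensity G)
    (hφ : Continuous φ) (ε x : ℝ) :
    jumpMean G ε φ x - φ x =
      (2 * π)⁻¹ * ∫ t in (-π)..π, G (x + t) * (φ (x + ε * t) - φ x) := by
  have hGc := hG.continuous
  have hmass := hG.moment_zero_one x
  simp only [moment, pow_zero, one_mul] at hmass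
  simp only [mul_sub]
  rw [intervalIntegral.integral_sub (Continuous.intervalIntegrable (by fun_prop) _ _)
    (Continuous.intervalIntegrable (by fun_prop) _ _), intervalIntegral.integral_mul_const,
    mul_sub, ← mul_assoc _ _ (φ x), hmass, one_mul, jumpMean]

theorem integral_mul_jumpMean {w φ : ℝ → ℝ} (hG : Continuous G) (hw : Continuous w)
    (hφ : Continuous φ) (hG_per : Function.Periodic G (2 * π))
    (hw_per : Function.Periodic w (2 * π)) (hφ_per : Function.Periodic φ (2 * π)) (ε : ℝ) :
    ∫ x in (-π)..π, w x * jumpMean G ε φ x = ∫ x in (-π)..π, jumpMeanAdjoint G ε w x * φ x := by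
  have hshift := integral_integral_comp_add_left_of_periodic
    (F := fun x t => w x * (G (x + t) * φ (x + ε * t))) (σ := fun t => -(ε * t))
    (a := -π) (b := π) (c := -π) (d := π) (T := 2 * π) (by unfold Function.uncurry; fun_prop)
    (by fun_prop)
    (fun t x => by simp only [add_right_comm x (2 * π), hw_per _, hG_per _, hφ_per _]) (by ring)
  simp only [neg_add_eq_sub, sub_add_cancel, ← mul_assoc,
    intervalIntegral.integral_mul_const] at hshift
  simp only [mul_assoc, intervalIntegral.integral_const_mul] at hshift
  simp only [jumpMean, jumpMeanAdjoint, mul_left_comm (w _), mul_assoc,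
    intervalIntegral.integral_const_mul, ← hshift]

theorem IsPeriodicDensity.continuous_adjointOne (hG : IsPeriodicDensity G) (α β : ℝ) :
    Continuous (adjointOne G α β) := by
  have hGc := hG.continuous
  have hD := hG.continuous_potentialDeriv
  have hw := hG.continuous_gibbsWeight β
  have hJ := continuous_jumpMeanAdjoint hGc hw (α * β)
  have hw₀ : ∀ x, gibbsWeight G β x ≠ 0 := fun x => (exp_pos _).ne'
  unfold adjointOne
  fun_prop (disch := exact hw₀ _)

theorem gibbsWeight_mul_adjointOne (α β x : ℝ) :
    gibbsWeight G β x * adjointOne G α β x =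
      (1 / 2) * (gibbsWeight G β x *
        (β ^ 2 * potentialDeriv G x ^ 2 - 2 * β * (1 - G (x + π)))) +
      α⁻¹ * (jumpMeanAdjoint G (α * β) (gibbsWeight G β) x - gibbsWeight G β x) := by
  have hw₀ : gibbsWeight G β x ≠ 0 := (exp_pos _).ne'
  rw [adjointOne]
  field_simp

theorem IsPeriodicDensity.integral_gibbsWeight_mul_lineGenerator (hG : IsPeriodicDensity G)
    (α β : ℝ) {φ : ℝ → ℝ} (hφ_per : Function.Periodic φ (2 * π)) (hφ : ContDiff ℝ 2 φ) :
    ∫ x in (-π)..π, gibbsWeight G β x * lineGenerator G α β φ x =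
      ∫ x in (-π)..π, gibbsWeight G β x * (φ x * adjointOne G α β x) := by
  have hGc := hG.continuous
  have hφc := hφ.continuous
  have hD := hG.continuous_potentialDeriv
  have hw := hG.continuous_gibbsWeight β
  have hw_per := hG.periodic_gibbsWeight β
  have hJ := continuous_jumpMean hGc hφc (α * β)
  have hJ' := continuous_jumpMeanAdjoint hGc hw (α * β)
  have hdiffusion := integral_mul_deriv_deriv_of_periodic (a := -π) (b := π)
    (hG.hasDerivAt_gibbsWeight β) (hG.hasDerivAt_deriv_gibbsWeight β) (by fun_prop) hφ hw_per
    (fun x => by simp only [hw_per x, potentialDeriv, moment_periodic hG.periodic 1 1 x])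
    hφ_per (by ring)
  have hjump := integral_mul_jumpMean hGc hw hφc hG.periodic hw_per hφ_per (α * β)
  have hgenerator : ∀ x, gibbsWeight G β x * lineGenerator G α β φ x =
      (1 / 2) * (gibbsWeight G β x * deriv (deriv φ) x) +
        α⁻¹ * (gibbsWeight G β x * jumpMean G (α * β) φ x) -
        α⁻¹ * (gibbsWeight G β x * φ x) := fun x => by
    rw [lineGenerator]; ring
  have hadjoint : ∀ x, gibbsWeight G β x * (φ x * adjointOne G α β x) =
      (1 / 2) * (gibbsWeight G β x *
        (β ^ 2 * potentialDeriv G x ^ 2 - 2 * β * (1 - G (x + π))) * φ x) +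
        α⁻¹ * (jumpMeanAdjoint G (α * β) (gibbsWeight G β) x * φ x) -
        α⁻¹ * (gibbsWeight G β x * φ x) := fun x => by
    rw [mul_left_comm, gibbsWeight_mul_adjointOne]; ring
  simp only [hgenerator, hadjoint]
  rw [intervalIntegral.integral_sub, intervalIntegral.integral_add,
    intervalIntegral.integral_sub, intervalIntegral.integral_add]
  · simp only [intervalIntegral.integral_const_mul, hdiffusion, hjump]
  all_goals exact Continuous.intervalIntegrable (by fun_prop) _ _

end Adjoint

section Estimate

variable {G : ℝ → ℝ} {M : ℝ}

/-- The constant of the second-order expansion of `exp (β * (U₂ x - U₂ (x - s)))`, for a density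
`G` with `|1 - G| ≤ M`. -/
def expansionConst (M : ℝ) : ℝ :=
  (2 * π * (1 + M)) ^ 2 * exp (2 * π * (1 + M) * (π / 2)) + 2 * M

/-- The factor of `α * β ^ 4` in the bound for `adjointOne`, for a density `G` with
`|1 - G| ≤ M`. -/
def adjointOneConst (M : ℝ) : ℝ :=
  6 * π ^ 2 * (1 + M) ^ 2 + 2 * M + expansionConst M * π ^ 2 * (1 + M)

theorem adjointOne_eq_add_add {α : ℝ} (hα : α ≠ 0) (β x : ℝ) :
    adjointOne G α β x =
      β ^ 2 * (potentialDeriv G x * (moment 1 (1 - α * β) G x - moment 1 1 G x)) +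
      α⁻¹ * (moment 0 (1 - α * β) G x - 1 - α * β * (1 - G (x + π))) +
      α⁻¹ * ((gibbsWeight G β x)⁻¹ * jumpMeanAdjoint G (α * β) (gibbsWeight G β) x -
        moment 0 (1 - α * β) G x -
        β * (α * β) * potentialDeriv G x * moment 1 (1 - α * β) G x) := by
  have hmoment : moment 1 1 G x = -(potentialDeriv G x / 2) := by rw [potentialDeriv]; ring
  rw [hmoment, adjointOne]
  field_simp
  ring

theorem adjointOneConst_nonneg (hM : 0 ≤ M) : 0 ≤ adjointOneConst M := by
  unfold adjointOneConst expansionConst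
  positivity

theorem abs_le_one_add (hM : ∀ y, |1 - G y| ≤ M) (y : ℝ) : |G y| ≤ 1 + M := by
  have h := abs_sub_abs_le_abs_sub (G y) 1
  rw [abs_one, abs_sub_comm] at h
  linarith [hM y]

namespace IsPeriodicDensity

theorem abs_moment_zero_sub_le (hG : IsPeriodicDensity G) (hM : ∀ y, |1 - G y| ≤ M)
    {ε η x : ℝ} (hε₀ : 0 ≤ ε) (hε : ε ≤ 1 / 2)
    (hη : ∀ y, |y - (x + π)| ≤ ε * π → |G y - G (x + π)| ≤ η) :
    |moment 0 (1 - ε) G x - 1 - ε * (1 - G (x + π))| ≤ 2 * M * ε ^ 2 + 2 * ε * η := by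
  set c := G (x + π)
  have hnear : ∀ s, (1 - ε) * π ≤ |s| → |s| ≤ π → |G (x + s) - c| ≤ η := fun s hs₁ hs₂ => by
    rcases le_total 0 s with hs | hs
    · rw [abs_of_nonneg hs] at hs₁ hs₂
      exact hη _ (abs_le.2 ⟨by linarith, by linarith [mul_nonneg hε₀ pi_pos.le]⟩)
    · rw [abs_of_nonpos hs] at hs₁ hs₂
      rw [← hG.periodic (x + s)]
      exact hη _ (abs_le.2 ⟨by linarith [mul_nonneg hε₀ pi_pos.le], by linarith⟩)
  have htail := abs_moment_one_sub_pow_mul_moment_le (G := fun y => G y - c)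
    (hG.continuous.sub continuous_const) 0 (r := 1 - ε) (by linarith) (by linarith) hnear
  rw [moment_zero_sub_const hG.continuous, moment_zero_sub_const hG.continuous,
    hG.moment_zero_one, zero_add, pow_one, pow_zero, one_mul, sub_sub_cancel] at htail
  set m := moment 0 (1 - ε) G x
  have hexcess : |(1 - ε) * (m - 1 - ε * (1 - c))| ≤ ε * η + ε ^ 2 * M := calc
    |(1 - ε) * (m - 1 - ε * (1 - c))|
      = |ε ^ 2 * (1 - c) - (1 - c - (1 - ε) * (m - c))| := by congr 1; ring
    _ ≤ |ε ^ 2 * (1 - c)| + |1 - c - (1 - ε) * (m - c)| := abs_sub _ _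
    _ ≤ ε ^ 2 * M + ε * η := by
      rw [abs_mul, abs_sq]
      gcongr
      exact hM _
    _ = ε * η + ε ^ 2 * M := add_comm _ _
  rw [abs_mul, abs_of_nonneg (by linarith)] at hexcess
  nlinarith [abs_nonneg (m - 1 - ε * (1 - c))]

theorem abs_moment_one_sub_le (hG : IsPeriodicDensity G) {K : ℝ} (hK : ∀ y, |G y| ≤ K)
    {ε : ℝ} (hε₀ : 0 ≤ ε) (hε : ε ≤ 1) (x : ℝ) :
    |moment 1 (1 - ε) G x - moment 1 1 G x| ≤ 3 * π * K * ε := by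
  have htail := abs_moment_one_sub_pow_mul_moment_le hG.continuous 1 (r := 1 - ε) (x := x)
    (by linarith) (by linarith) fun s _ _ => hK (x + s)
  have hmoment := abs_moment_le 1 hK (1 - ε) x
  rw [sub_sub_cancel] at htail
  rw [pow_one] at htail hmoment
  calc |moment 1 (1 - ε) G x - moment 1 1 G x|
      = |ε * (2 - ε) * moment 1 (1 - ε) G x -
          (moment 1 1 G x - (1 - ε) ^ (1 + 1) * moment 1 (1 - ε) G x)| := by congr 1; ring
    _ ≤ |ε * (2 - ε) * moment 1 (1 - ε) G x| +
          |moment 1 1 G x - (1 - ε) ^ (1 + 1) * moment 1 (1 - ε) G x| := abs_sub _ _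
    _ ≤ ε * 2 * (π * K) + ε * (π * K) := by
      rw [abs_mul, abs_of_nonneg (mul_nonneg hε₀ (by linarith))]
      gcongr
      linarith
    _ = 3 * π * K * ε := by ring

theorem inv_mul_jumpMeanAdjoint_sub_eq (hG : IsPeriodicDensity G) (β ε x : ℝ) :
    (gibbsWeight G β x)⁻¹ * jumpMeanAdjoint G ε (gibbsWeight G β) x - moment 0 (1 - ε) G x -
        β * ε * potentialDeriv G x * moment 1 (1 - ε) G x =
      (2 * π)⁻¹ * ∫ t in (-π)..π, (exp (β * (potential G x - potential G (x - ε * t))) - 1 -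
        β * potentialDeriv G x * (ε * t)) * G (x + (1 - ε) * t) := by
  have hGc := hG.continuous
  have hw := hG.continuous_gibbsWeight β
  have hintegrand : ∀ t, (exp (β * (potential G x - potential G (x - ε * t))) - 1 -
        β * potentialDeriv G x * (ε * t)) * G (x + (1 - ε) * t) =
      (gibbsWeight G β x)⁻¹ * (gibbsWeight G β (x - ε * t) * G (x - ε * t + t)) -
        t ^ 0 * G (x + (1 - ε) * t) -
        β * ε * potentialDeriv G x * (t ^ 1 * G (x + (1 - ε) * t)) := fun t => by
    have harg : x - ε * t + t = x + (1 - ε) * t := by ring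
    have hexp : (gibbsWeight G β x)⁻¹ * gibbsWeight G β (x - ε * t) =
        exp (β * (potential G x - potential G (x - ε * t))) := by
      rw [gibbsWeight, gibbsWeight, ← exp_neg, ← exp_add]; congr 1; ring
    rw [harg, ← mul_assoc (gibbsWeight G β x)⁻¹, hexp]
    ring
  simp only [hintegrand]
  rw [intervalIntegral.integral_sub, intervalIntegral.integral_sub]
  · simp only [intervalIntegral.integral_const_mul, jumpMeanAdjoint, moment]
    ring
  all_goals exact Continuous.intervalIntegrable (by fun_prop) _ _

theorem abs_inv_mul_jumpMeanAdjoint_sub_le (hG : IsPeriodicDensity G)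
    (hM : ∀ y, |1 - G y| ≤ M) {β ε : ℝ} (hβ : 1 ≤ β) (hε₀ : 0 ≤ ε) (hε : β * ε ≤ 1 / 2)
    (x : ℝ) :
    |(gibbsWeight G β x)⁻¹ * jumpMeanAdjoint G ε (gibbsWeight G β) x - moment 0 (1 - ε) G x -
        β * ε * potentialDeriv G x * moment 1 (1 - ε) G x| ≤
      expansionConst M * (β * ε * π) ^ 2 * (1 + M) := by
  have hM₀ : 0 ≤ M := (abs_nonneg _).trans (hM 0)
  have hβε : 0 ≤ β * ε := mul_nonneg (zero_le_one.trans hβ) hε₀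
  have hK := abs_le_one_add hM
  rw [hG.inv_mul_jumpMeanAdjoint_sub_eq]
  refine abs_two_pi_inv_mul_integral_le fun t ht => ?_
  have hscale : |β * (ε * t)| ≤ β * ε * π := by
    rw [← mul_assoc, abs_mul, abs_of_nonneg hβε]
    gcongr
  have hexpand := abs_exp_mul_sub_sub_le (ρ := π / 2) hG.hasDerivAt_potential
    (abs_potentialDeriv_le hK) (hG.abs_potentialDeriv_sub_le hM) hβ
    (hscale.trans (by nlinarith [pi_pos])) x
  have hconst : 0 ≤ expansionConst M := by unfold expansionConst; positivity
  rw [abs_mul]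
  gcongr
  · refine hexpand.trans (mul_le_mul_of_nonneg_left ?_ hconst)
    rw [← sq_abs]
    gcongr
  · exact hK _

theorem abs_adjointOne_le (hG : IsPeriodicDensity G) (hM : ∀ y, |1 - G y| ≤ M)
    {α β η x : ℝ} (hβ : 1 ≤ β) (hα : 0 < α) (hαβ : α * β ^ 2 ≤ 1 / 2)
    (hη : ∀ y, |y - (x + π)| ≤ α * β * π → |G y - G (x + π)| ≤ η) :
    |adjointOne G α β x| ≤ adjointOneConst M * (α * β ^ 4) + 2 * β * η := by
  have hM₀ : 0 ≤ M := (abs_nonneg _).trans (hM 0)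
  have hK := abs_le_one_add hM
  have hε₀ : 0 ≤ α * β := mul_nonneg hα.le (zero_le_one.trans hβ)
  have hε : α * β ≤ 1 / 2 := by nlinarith
  set D := potentialDeriv G x
  set m₀ := moment 0 (1 - α * β) G x
  set m₁ := moment 1 (1 - α * β) G x
  set J := (gibbsWeight G β x)⁻¹ * jumpMeanAdjoint G (α * β) (gibbsWeight G β) x
  set c := G (x + π)
  have hdrift : |β ^ 2 * (D * (m₁ - moment 1 1 G x))| ≤
      6 * π ^ 2 * (1 + M) ^ 2 * (α * β ^ 3) := by
    rw [abs_mul, abs_mul, abs_sq]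
    calc _ ≤ β ^ 2 * (2 * π * (1 + M) * (3 * π * (1 + M) * (α * β))) := by
          gcongr
          · exact abs_potentialDeriv_le hK x
          · exact hG.abs_moment_one_sub_le hK hε₀ (by linarith) x
      _ = _ := by ring
  have hmass : |α⁻¹ * (m₀ - 1 - α * β * (1 - c))| ≤ 2 * M * (α * β ^ 2) + 2 * β * η := by
    rw [abs_mul, abs_of_pos (inv_pos.2 hα), inv_mul_le_iff₀ hα]
    linarith [hG.abs_moment_zero_sub_le hM hε₀ hε hη]
  have hremainder : |α⁻¹ * (J - m₀ - β * (α * β) * D * m₁)| ≤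
      expansionConst M * π ^ 2 * (1 + M) * (α * β ^ 4) := by
    rw [abs_mul, abs_of_pos (inv_pos.2 hα), inv_mul_le_iff₀ hα]
    linarith [hG.abs_inv_mul_jumpMeanAdjoint_sub_le hM hβ hε₀ (by linarith) x]
  have hpow₃ : β ^ 3 ≤ β ^ 4 := pow_le_pow_right₀ hβ (by norm_num)
  have hpow₂ : β ^ 2 ≤ β ^ 4 := pow_le_pow_right₀ hβ (by norm_num)
  calc |adjointOne G α β x| ≤ 6 * π ^ 2 * (1 + M) ^ 2 * (α * β ^ 3) +
        (2 * M * (α * β ^ 2) + 2 * β * η) + expansionConst M * π ^ 2 * (1 + M) * (α * β ^ 4) := by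
        rw [adjointOne_eq_add_add hα.ne']
        exact (abs_add_three _ _ _).trans (add_le_add_three hdrift hmass hremainder)
    _ ≤ 6 * π ^ 2 * (1 + M) ^ 2 * (α * β ^ 4) +
        (2 * M * (α * β ^ 4) + 2 * β * η) + expansionConst M * π ^ 2 * (1 + M) * (α * β ^ 4) := by
        gcongr
    _ = adjointOneConst M * (α * β ^ 4) + 2 * β * η := by rw [adjointOneConst]; ring

end IsPeriodicDensity

end Estimate

section Circle

theorem continuous_of_abs_sub_le_rpow {X : Type*} [PseudoMetricSpace X] {g : X → ℝ} {A a : ℝ}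
    (ha : 0 < a) (hg : ∀ x y, |g x - g y| ≤ A * dist x y ^ a) : Continuous g := by
  refine continuous_iff_continuousAt.2 fun x => tendsto_iff_dist_tendsto_zero.2 ?_
  have hlim : Tendsto (fun y => A * dist y x ^ a) (nhds x) (nhds 0) := by
    have hcont : Continuous fun y => A * dist y x ^ a :=
      ((continuous_id.dist continuous_const).rpow_const fun _ => Or.inr ha.le).const_mul A
    simpa [zero_rpow ha.ne'] using hcont.tendsto x
  exact squeeze_zero (fun _ => dist_nonneg) (fun y => hg y x) hlim

theorem abs_sub_le_mul_rpow_of_dist_le {X : Type*} [PseudoMetricSpace X] {g : X → ℝ}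
    {A a δ L : ℝ} (hA : 0 ≤ A) (ha₀ : 0 ≤ a) (ha₁ : a ≤ 1)
    (hg : ∀ x y, |g x - g y| ≤ A * dist x y ^ a) (hδ : 0 ≤ δ) (hL : 1 ≤ L) {x y : X}
    (hxy : dist x y ≤ δ * L) : |g x - g y| ≤ A * L * δ ^ a := calc
  |g x - g y| ≤ A * dist x y ^ a := hg x y
  _ ≤ A * (δ * L) ^ a := by gcongr
  _ = A * L ^ a * δ ^ a := by rw [mul_rpow hδ (zero_le_one.trans hL)]; ring
  _ ≤ A * L * δ ^ a := by
    gcongr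
    exact rpow_le_self_of_one_le hL ha₁

theorem dist_coe_le_abs_sub (x y : ℝ) : dist (x : 𝕋) (y : 𝕋) ≤ |x - y| := by
  rw [dist_eq_norm, ← AddCircle.coe_sub]
  exact QuotientAddGroup.norm_mk_le_norm

theorem dist_le_pi (x y : 𝕋) : dist x y ≤ π := by
  rw [dist_eq_norm]
  refine (AddCircle.norm_le_half_period (2 * π) two_pi_pos.ne').trans_eq ?_
  rw [abs_of_pos two_pi_pos, mul_div_cancel_left₀ _ two_ne_zero]

theorem integral_lam (f : 𝕋 → ℝ) :
    ∫ z, f z ∂lam = (2 * π)⁻¹ * ∫ t in (-π)..π, f (t : 𝕋) := by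
  have h := AddCircle.intervalIntegral_preimage (2 * π) (-π) f
  have hend : -π + 2 * π = π := by ring
  rw [hend] at h
  rw [h, lam, MeasureTheory.integral_smul_measure, ENNReal.toReal_inv,
    ENNReal.toReal_ofReal two_pi_pos.le, smul_eq_mul]

theorem rep_coe {t : ℝ} (ht : t ∈ Ioc (-π) π) : rep (t : 𝕋) = t :=
  AddCircle.equivIoc_coe_of_mem (by rwa [two_mul, neg_add_cancel_left])

theorem coe_rep (z : 𝕋) : ((rep z : ℝ) : 𝕋) = z := AddCircle.coe_equivIoc

theorem measurable_rep : Measurable rep :=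
  measurable_subtype_coe.comp (AddCircle.measurableEquivIoc (2 * π) (-π)).measurable

theorem integral_withDensity_lam {g : 𝕋 → ℝ} (hg : Measurable g) (hg₀ : ∀ x, 0 ≤ g x)
    (f : 𝕋 → ℝ) :
    ∫ z, f z ∂(lam.withDensity fun y => ENNReal.ofReal (g y)) =
      (2 * π)⁻¹ * ∫ t in (-π)..π, g (t : 𝕋) * f (t : 𝕋) := by
  rw [integral_withDensity_eq_integral_toReal_smul hg.ennreal_ofReal
    (Eventually.of_forall fun x => ENNReal.ofReal_lt_top)]
  simp only [ENNReal.toReal_ofReal (hg₀ _), smul_eq_mul]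
  exact integral_lam _

theorem integral_withDensity_lam_sub {g : 𝕋 → ℝ} (hg : Measurable g) (hg₀ : ∀ x, 0 ≤ g x)
    (f : 𝕋 → ℝ) (x : ℝ) :
    ∫ y, f (y - (x : 𝕋)) ∂(lam.withDensity fun y => ENNReal.ofReal (g y)) =
      (2 * π)⁻¹ * ∫ t in (-π)..π, g ((x + t : ℝ) : 𝕋) * f (t : 𝕋) := by
  have hper : Function.Periodic (fun t : ℝ => g (t : 𝕋) * f ((t : 𝕋) - (x : 𝕋))) (2 * π) :=
    fun t => by simp only [AddCircle.coe_add_period]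
  rw [integral_withDensity_lam hg hg₀, ← integral_comp_add_left_of_periodic hper (by ring) x]
  simp only [AddCircle.coe_add, add_sub_cancel_left]

variable {g : 𝕋 → ℝ} {ν : Measure 𝕋}

theorem isPeriodicDensity_comp_coe [IsProbabilityMeasure ν] (hg : Continuous g) (hg₀ : ∀ x, 0 ≤ g x)
    (hν : ν = lam.withDensity fun y => ENNReal.ofReal (g y)) :
    IsPeriodicDensity fun x : ℝ => g (x : 𝕋) where
  continuous := hg.comp (AddCircle.continuous_mk' _)
  periodic x := by simp only [AddCircle.coe_add_period]
  integral_eq := by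
    have hmass := integral_withDensity_lam hg.measurable hg₀ fun _ => 1
    rw [← hν] at hmass
    simp only [MeasureTheory.integral_const, probReal_univ, smul_eq_mul, mul_one] at hmass
    exact ((inv_mul_eq_one₀ two_pi_pos.ne').1 hmass.symm).symm

theorem U2_coe (hg : Measurable g) (hg₀ : ∀ x, 0 ≤ g x)
    (hν : ν = lam.withDensity fun y => ENNReal.ofReal (g y)) (x : ℝ) :
    U2 ν (x : 𝕋) = potential (fun y : ℝ => g (y : 𝕋)) x := by
  simp only [U2, dist_comm (x : 𝕋), dist_eq_norm, hν, potential, moment, one_mul]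
  rw [integral_withDensity_lam_sub hg hg₀ fun y => ‖y‖ ^ 2]
  congr 1
  refine integral_congr_Ioo_of_le (neg_le_self pi_pos.le) fun t ht => ?_
  have hnorm : ‖(t : 𝕋)‖ = |t| := by
    rw [AddCircle.norm_coe_eq_abs_iff _ two_pi_pos.ne', abs_of_pos two_pi_pos,
      mul_div_cancel_left₀ _ two_ne_zero]
    exact abs_le.2 ⟨ht.1.le, ht.2.le⟩
  rw [hnorm, sq_abs, mul_comm]

theorem gen2_eq_lineGenerator [IsProbabilityMeasure ν] {φ : ℝ → ℝ} (hg : Continuous g)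
    (hg₀ : ∀ x, 0 ≤ g x)
    (hν : ν = lam.withDensity fun y => ENNReal.ofReal (g y)) (hφ : Continuous φ) (α β : ℝ)
    (z : 𝕋) :
    gen2 ν α β φ z = lineGenerator (fun y : ℝ => g (y : 𝕋)) α β φ (rep z) := by
  rw [gen2, lineGenerator, (isPeriodicDensity_comp_coe hg hg₀ hν).jumpMean_sub_eq hφ]
  have hshift := integral_withDensity_lam_sub hg.measurable hg₀
    (fun y => φ (rep z + α * β * rep y) - φ (rep z)) (rep z)
  rw [coe_rep, ← hν] at hshift
  rw [hshift]
  congr 3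
  refine integral_congr_Ioo_of_le (neg_le_self pi_pos.le) fun t ht => ?_
  rw [rep_coe (Ioo_subset_Ioc_self ht)]

theorem integral_gibbs2_comp_rep [IsProbabilityMeasure ν] (hg : Continuous g)
    (hg₀ : ∀ x, 0 ≤ g x)
    (hν : ν = lam.withDensity fun y => ENNReal.ofReal (g y)) (β : ℝ) (f : ℝ → ℝ) :
    ∫ z, f (rep z) ∂(gibbs2 ν β) = (2 * π)⁻¹ * ((Z2 ν β)⁻¹ *
      ∫ t in (-π)..π, gibbsWeight (fun y : ℝ => g (y : 𝕋)) β t * f t) := by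
  have hU : U2 ν = fun z => potential (fun y : ℝ => g (y : 𝕋)) (rep z) := by
    ext z; rw [← U2_coe hg.measurable hg₀ hν, coe_rep]
  have hU_meas : Measurable (U2 ν) := by
    rw [hU]
    exact (isPeriodicDensity_comp_coe hg hg₀ hν).continuous_potential.measurable.comp measurable_rep
  have hZ : 0 ≤ Z2 ν β := integral_nonneg fun x => (exp_pos _).le
  rw [gibbs2, integral_withDensity_lam (by fun_prop) (fun x => by positivity)]
  congr 1
  rw [← intervalIntegral.integral_const_mul]
  refine integral_congr_Ioo_of_le (neg_le_self pi_pos.le) fun t ht => ?_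
  simp only [rep_coe (Ioo_subset_Ioc_self ht), U2_coe hg.measurable hg₀ hν, gibbsWeight]
  ring

theorem abs_adjointOne_comp_coe_le {A a α β : ℝ} (hA : 0 ≤ A) (ha₀ : 0 ≤ a) (ha₁ : a ≤ 1)
    (hg : ∀ x y, |g x - g y| ≤ A * dist x y ^ a)
    (hG : IsPeriodicDensity fun y : ℝ => g (y : 𝕋)) (hβ : 1 ≤ β) (hα : 0 < α)
    (hαβ : α * β ^ 2 ≤ 1 / 2) (x : ℝ) :
    |adjointOne (fun y : ℝ => g (y : 𝕋)) α β x| ≤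
      (adjointOneConst (A * π) + 2 * (A * π)) * max (α * β ^ 4) (α ^ a * β ^ (1 + a)) := by
  have hβ₀ : 0 < β := one_pos.trans_le hβ
  have hπ : 1 ≤ π := one_le_two.trans two_le_pi
  have hosc : ∀ y z : 𝕋, |g y - g z| ≤ A * π := fun y z => by
    have h := abs_sub_le_mul_rpow_of_dist_le hA ha₀ ha₁ hg zero_le_one hπ
      ((dist_le_pi y z).trans_eq (one_mul π).symm)
    rwa [one_rpow, mul_one] at h
  have hmod : ∀ y : ℝ, |y - (x + π)| ≤ α * β * π →
      |g (y : 𝕋) - g ((x + π : ℝ) : 𝕋)| ≤ A * π * (α * β) ^ a := fun y hy =>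
    abs_sub_le_mul_rpow_of_dist_le hA ha₀ ha₁ hg (by positivity) hπ
      ((dist_coe_le_abs_sub _ _).trans hy)
  have hC := adjointOneConst_nonneg (mul_nonneg hA pi_pos.le)
  calc |adjointOne (fun y : ℝ => g (y : 𝕋)) α β x|
      ≤ adjointOneConst (A * π) * (α * β ^ 4) + 2 * β * (A * π * (α * β) ^ a) :=
        hG.abs_adjointOne_le (hG.abs_one_sub_le fun y z => hosc y z) hβ hα hαβ hmod
    _ = adjointOneConst (A * π) * (α * β ^ 4) + 2 * (A * π) * (α ^ a * β ^ (1 + a)) := by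
        rw [mul_rpow hα.le hβ₀.le, rpow_add hβ₀, rpow_one]; ring
    _ ≤ (adjointOneConst (A * π) + 2 * (A * π)) * max (α * β ^ 4) (α ^ a * β ^ (1 + a)) := by
        rw [add_mul]
        gcongr
        · exact le_max_left _ _
        · exact le_max_right _ _

end Circle

/-- Proposition `mbl0`: for `p = 2` and a Hölder density, there is a constant
`C = C(A)` such that for `β ≥ 1` and `0 < α < 1/(2β²)` the adjoint of `L_{α,β}` in `L²(μ_β)`
applied to `𝟙` (i.e. the function `h` representing `φ ↦ ∫ L_{α,β}φ dμ_β`) satisfies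
`‖h‖_∞ ≤ C max(αβ⁴, α^a β^{1+a})`. -/
theorem adjoint_one_estimate_p_two (A : ℝ) (hA : 0 < A) :
    ∃ C : ℝ, 0 < C ∧
      ∀ (a : ℝ), 0 < a → a ≤ 1 →
      ∀ (g : 𝕋 → ℝ) (ν : Measure 𝕋), IsProbabilityMeasure ν →
        ν = lam.withDensity (fun y => ENNReal.ofReal (g y)) →
        (∀ x, 0 ≤ g x) →
        (∀ x y : 𝕋, |g x - g y| ≤ A * dist x y ^ a) →
      ∀ (β α : ℝ), 1 ≤ β → 0 < α → α < 1 / (2 * β ^ 2) →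
      ∃ h : 𝕋 → ℝ, Measurable h ∧
        (∀ x, |h x| ≤ C * max (α * β ^ 4) (α ^ a * β ^ (1 + a))) ∧
        ∀ φ : ℝ → ℝ, Function.Periodic φ (2 * π) → ContDiff ℝ 2 φ →
          ∫ z, gen2 ν α β φ z ∂(gibbs2 ν β) = ∫ z, φ (rep z) * h z ∂(gibbs2 ν β) := by
  have hC := adjointOneConst_nonneg (mul_nonneg hA.le pi_pos.le)
  refine ⟨adjointOneConst (A * π) + 2 * (A * π), by positivity, ?_⟩
  intro a ha₀ ha₁ g ν _ hν hg₀ hHolder β α hβ hα hαβ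
  have hg := continuous_of_abs_sub_le_rpow ha₀ hHolder
  have hG := isPeriodicDensity_comp_coe hg hg₀ hν
  rw [lt_div_iff₀ (by positivity)] at hαβ
  refine ⟨fun z => adjointOne (fun y : ℝ => g (y : 𝕋)) α β (rep z),
    (hG.continuous_adjointOne α β).measurable.comp measurable_rep,
    fun z => abs_adjointOne_comp_coe_le hA.le ha₀.le ha₁ hHolder hG hβ hα (by linarith) (rep z),
    fun φ hφ_per hφ => ?_⟩
  simp only [gen2_eq_lineGenerator hg hg₀ hν hφ.continuous]
  rw [integral_gibbs2_comp_rep hg hg₀ hν,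
    integral_gibbs2_comp_rep hg hg₀ hν β fun t => φ t * adjointOne _ α β t,
    hG.integral_gibbsWeight_mul_lineGenerator α β hφ_per hφ]
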